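/- arXiv:2010.13331 — 7 statements merged into one kernel-verified Lean document; each statement's English description precedes it below -/
import Mathlib

section
/- Let {α_n}_{n≥0} be a bounded sequence of complex numbers, let {n_k}_{k≥0} be a strictly increasing sequence of nonnegative integers of bounded increments with n_0 = 0, let α be a complex number, and let β ≥ 0 be a real number. Then liminf_k |α_{n_k + j} − α| > β for every j ≥ 0 if and only if liminf_n |α_n − α| > β. -/
open Filter Topology

/-!
For a bounded real sequence `u`, `β < liminf u` means that some `γ > β` is eventually a lower
bound of `u` (`lt_liminf_iff_exists_eventually_le`). Such a `γ` for the full sequence serves every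
shifted subsequence. Conversely, if the gaps are at most `M`, every large index has the form
`n k + j` with `k` large and `j ≤ M` (`exists_index_le_lt`), so finitely many shifts cover the tail
of the sequence and the finitely many bounds `γ j > β` admit a common one that still exceeds `β`.
-/

theorem lt_liminf_iff_exists_eventually_le (u : ℕ → ℝ) (β C : ℝ) (h0 : ∀ k, 0 ≤ u k)
    (hC : ∀ k, u k ≤ C) :
    β < liminf u atTop ↔ ∃ γ, β < γ ∧ ∀ᶠ k in atTop, γ ≤ u k := by
  have hb : IsBoundedUnder (· ≥ ·) atTop u := isBoundedUnder_of ⟨0, h0⟩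
  have hc : IsCoboundedUnder (· ≥ ·) atTop u :=
    (isBoundedUnder_of (r := (· ≤ ·)) ⟨C, hC⟩).isCoboundedUnder_ge
  constructor
  · intro h
    obtain ⟨γ, h1, h2⟩ := exists_between h
    exact ⟨γ, h1, (eventually_lt_of_lt_liminf h2 hb).mono fun _ h => h.le⟩
  · rintro ⟨γ, h1, h2⟩
    exact h1.trans_le (le_liminf_of_le hc h2)

/-- Every index past `n K` lies in one of the blocks `[n k, n (k + 1))` with `k ≥ K`. -/
theorem exists_index_le_lt (n : ℕ → ℕ) (hmono : StrictMono n) (K m : ℕ) (hm : n K ≤ m) :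
    ∃ k, K ≤ k ∧ n k ≤ m ∧ m < n (k + 1) := by
  induction m, hm using Nat.le_induction with
  | base => exact ⟨K, le_rfl, le_rfl, hmono (Nat.lt_succ_self K)⟩
  | succ m _ ih =>
    obtain ⟨k, h1, h2, h3⟩ := ih
    by_cases h : m + 1 < n (k + 1)
    · exact ⟨k, h1, by omega, h⟩
    · have := hmono (Nat.lt_succ_self (k + 1))
      exact ⟨k + 1, by omega, by omega, by simp only [Nat.succ_eq_add_one] at this; omega⟩

/-- For a bounded sequence of complex numbers and a boundedly spaced subsequence `{n k}`
with `n 0 = 0`: `liminf_k |α (n k + j) - a| > β` for every `j ≥ 0` iff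
`liminf_n |α n - a| > β`. -/
theorem liminf_gt_iff_boundedly_spaced_shifts (α : ℕ → ℂ) (a : ℂ) (β : ℝ) (hβ : 0 ≤ β)
    (hbound : ∃ C : ℝ, ∀ m, ‖α m‖ ≤ C) (n : ℕ → ℕ)
    (hmono : StrictMono n) (h0 : n 0 = 0)
    (hbdd : ∃ M : ℕ, ∀ k, n (k + 1) - n k ≤ M) :
    (∀ j : ℕ, β < Filter.liminf (fun k => ‖α (n k + j) - a‖) atTop) ↔
      β < Filter.liminf (fun m => ‖α m - a‖) atTop := by
  obtain ⟨C, hC⟩ := hbound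
  obtain ⟨M, hM⟩ := hbdd
  have hC' : ∀ m, ‖α m - a‖ ≤ C + ‖a‖ := fun m =>
    (norm_sub_le _ _).trans (by linarith [hC m])
  rw [lt_liminf_iff_exists_eventually_le _ β _ (fun _ => norm_nonneg _) hC']
  simp_rw [fun j => lt_liminf_iff_exists_eventually_le (fun k => ‖α (n k + j) - a‖) β _
    (fun _ => norm_nonneg _) (fun _ => hC' _)]
  constructor
  · intro h
    choose g hg hev using h
    -- any `γ` close enough to `β` from above lies below the finitely many `g j`, `j ≤ M`
    have hγ : ∀ᶠ γ in 𝓝[>] β, ∀ j ∈ Finset.range (M + 1), γ < g j :=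
      (Finset.eventually_all _).2 fun j _ => nhdsWithin_le_nhds (Iio_mem_nhds (hg j))
    obtain ⟨γ, hγ, hβγ⟩ := (hγ.and self_mem_nhdsWithin).exists
    have hall : ∀ᶠ k in atTop, ∀ j ∈ Finset.range (M + 1), g j ≤ ‖α (n k + j) - a‖ :=
      (Finset.eventually_all _).2 fun j _ => hev j
    obtain ⟨K, hK⟩ := eventually_atTop.1 hall
    refine ⟨γ, hβγ, eventually_atTop.2 ⟨n K, fun m hm => ?_⟩⟩
    obtain ⟨k, h1, h2, h3⟩ := exists_index_le_lt n hmono K m hm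
    have hj : m - n k ∈ Finset.range (M + 1) := by
      have := hM k
      rw [Finset.mem_range]
      omega
    have := hK k h1 _ hj
    rw [Nat.add_sub_cancel' h2] at this
    exact (hγ _ hj).le.trans this
  · rintro ⟨γ, h1, h2⟩ j
    exact ⟨γ, h1, ((tendsto_add_atTop_nat j).comp hmono.tendsto_atTop).eventually h2⟩
end

section
/- Let H be a complex Hilbert space, let T be a bounded linear operator on H, let x ∈ H, and let {n_k}_{k≥0} be a strictly increasing sequence of nonnegative integers of bounded increments with n_0 = 0. Then ⟨T^{n_k} x, z⟩ → 0 as k → ∞ for every z ∈ H if and only if ⟨T^n x, z⟩ → 0 as n → ∞ for every z ∈ H (i.e., T^{n_k} x converges weakly to 0 if and only if T^n x converges weakly to 0). -/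
/-!
The full sequence trivially controls the subsequence. Conversely, since `n 0 = 0` and the increments
are at most `M`, every `m` has the form `n k + j` with `j ≤ M`, and
`⟪T ^ (n k + j) x, z⟫ = ⟪T ^ n k x, (T ^ j)† z⟫`. Thus `⟪T ^ m x, z⟫` is always a term of one of the
`M + 1` null sequences obtained by testing `T ^ n k x` against the vectors `(T ^ j)† z`, `j ≤ M`,
and the index `k` tends to infinity with `m`.
-/

open Filter Topology
open scoped InnerProductSpace

/-- For an operator `T` on a complex Hilbert space, `x ∈ H`, and a boundedly spaced
subsequence `{n k}` with `n 0 = 0`: `T^{n k} x ⇀ 0` iff `T^n x ⇀ 0`. -/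
theorem weak_limit_zero_iff_boundedly_spaced
    {H : Type*} [NormedAddCommGroup H] [InnerProductSpace ℂ H] [CompleteSpace H]
    (T : H →L[ℂ] H) (x : H) (n : ℕ → ℕ)
    (hmono : StrictMono n) (h0 : n 0 = 0)
    (hbdd : ∃ M : ℕ, ∀ k, n (k + 1) - n k ≤ M) :
    (∀ z : H, Tendsto (fun k => ⟪(T ^ n k) x, z⟫_ℂ) atTop (nhds 0)) ↔
      (∀ z : H, Tendsto (fun m => ⟪(T ^ m) x, z⟫_ℂ) atTop (nhds 0)) := by
  constructor
  · intro h z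
    obtain ⟨M, hM⟩ := hbdd
    have key : ∀ m : ℕ, ∃ k, n k ≤ m ∧ m < n (k + 1) := by
      intro m
      induction m with
      | zero => exact ⟨0, h0.le, h0.symm.trans_lt (hmono zero_lt_one)⟩
      | succ m ih =>
        obtain ⟨k, hk1, hk2⟩ := ih
        by_cases hlt : m + 1 < n (k + 1)
        · exact ⟨k, by omega, hlt⟩
        · have := hmono (lt_add_one (k + 1))
          exact ⟨k + 1, by omega, by omega⟩
    have shift : ∀ k j, ⟪(T ^ (n k + j)) x, z⟫_ℂ
        = ⟪(T ^ n k) x, (ContinuousLinearMap.adjoint (T ^ j)) z⟫_ℂ := by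
      intro k j
      rw [ContinuousLinearMap.adjoint_inner_right, add_comm, pow_add]
      rfl
    rw [Metric.tendsto_atTop]
    intro ε hε
    -- Only the finitely many shifts `j ≤ M` occur, so one threshold `K` serves all of them.
    have hev : ∀ᶠ k in atTop, ∀ j ∈ Set.Iic M, dist ⟪(T ^ (n k + j)) x, z⟫_ℂ 0 < ε := by
      refine (Filter.eventually_all_finite (Set.finite_Iic M)).2 fun j _ => ?_
      simp only [shift]
      exact Metric.tendsto_nhds.1 (h (ContinuousLinearMap.adjoint (T ^ j) z)) ε hε
    obtain ⟨K, hK⟩ := eventually_atTop.1 hev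
    refine ⟨n K, fun m hm => ?_⟩
    obtain ⟨k, hk1, hk2⟩ := key m
    have hKk : K < k + 1 := hmono.lt_iff_lt.1 (lt_of_le_of_lt hm hk2)
    have hMk := hM k
    have := hK k (by omega) (m - n k) (by simp only [Set.mem_Iic]; omega)
    rwa [Nat.add_sub_cancel' hk1] at this
  · intro h z
    exact (h z).comp hmono.tendsto_atTop
end

section
/- Let H be a complex Hilbert space, let T be a power bounded operator on H having a noncollapsing vector, let x ∈ H, let {n_k}_{k≥0} be a strictly increasing sequence of nonnegative integers of bounded increments with n_0 = 0, and let γ > 0. If limsup_k |⟨T^{n_k} x, z⟩| < γ‖x‖‖z‖ for every noncollapsing vector z for the adjoint T*, then limsup_n |⟨T^n x, z⟩| < γ' ‖x‖‖z‖ for every noncollapsing vector z for T*, where γ' = γ · sup_n ‖T^n‖. -/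
/-!
Write `S = sup_m ‖T^m‖`. If `n` has increments at most `M`, every `m` is `n k + j` with `j ≤ M`, and
`⟪T^m x, z⟫ = ⟪T^(n k) x, (T*)^j z⟫`. The vector `(T*)^j z` is again noncollapsing for `T*` and has
norm at most `S ‖z‖`, so for each `j` the limsup over `k` is strictly below `γ S ‖x‖ ‖z‖`. Only
finitely many `j` occur, hence a single constant `c < γ S ‖x‖ ‖z‖` eventually bounds all these
sequences, and therefore the whole sequence `‖⟪T^m x, z⟫‖`.
-/

open Filter Topology
open scoped InnerProductSpace

/-- Every natural number lies in one of the half-open intervals `[n k, n (k + 1))`. -/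
lemma exists_eq_add_of_strictMono {n : ℕ → ℕ} (hmono : StrictMono n) (h0 : n 0 = 0) (m : ℕ) :
    ∃ k j, m = n k + j ∧ m < n (k + 1) := by
  induction m with
  | zero => exact ⟨0, 0, by simp [h0], (Nat.zero_le _).trans_lt (hmono Nat.zero_lt_one)⟩
  | succ m ih =>
    obtain ⟨k, j, hm, hlt⟩ := ih
    by_cases hk : m + 1 < n (k + 1)
    · exact ⟨k, j + 1, by omega, hk⟩
    · have : n (k + 1) < n (k + 1 + 1) := hmono (Nat.lt_succ_self (k + 1))
      exact ⟨k + 1, 0, by omega, by omega⟩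

/-- Let `T` be a power bounded operator with a noncollapsing vector, `x ∈ H`, and
`{n k}` a boundedly spaced subsequence with `n 0 = 0`.  If
`limsup_k |⟪T^{n k} x, z⟫| < γ ‖x‖ ‖z‖` for every noncollapsing vector `z` for `T*`,
then `limsup_m |⟪T^m x, z⟫| < γ' ‖x‖ ‖z‖` for every noncollapsing vector `z` for `T*`,
where `γ' = γ ⬝ sup_m ‖T^m‖`. -/
theorem limsup_inner_lt_of_boundedly_spaced
    {H : Type*} [NormedAddCommGroup H] [InnerProductSpace ℂ H] [CompleteSpace H]
    (T : H →L[ℂ] H) (hpb : ∃ C : ℝ, ∀ m : ℕ, ‖T ^ m‖ ≤ C)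
    (hnc : ∃ y : H, ∀ m : ℕ, (T ^ m) y ≠ 0)
    (x : H) (n : ℕ → ℕ) (hmono : StrictMono n) (h0 : n 0 = 0)
    (hbdd : ∃ M : ℕ, ∀ k, n (k + 1) - n k ≤ M)
    (γ γ' : ℝ) (hγ : 0 < γ) (hγ' : γ' = γ * ⨆ m : ℕ, ‖T ^ m‖)
    (h : ∀ z : H, (∀ m : ℕ, ((ContinuousLinearMap.adjoint T) ^ m) z ≠ 0) →
      Filter.limsup (fun k => ‖⟪(T ^ n k) x, z⟫_ℂ‖) atTop < γ * ‖x‖ * ‖z‖) :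
    ∀ z : H, (∀ m : ℕ, ((ContinuousLinearMap.adjoint T) ^ m) z ≠ 0) →
      Filter.limsup (fun m => ‖⟪(T ^ m) x, z⟫_ℂ‖) atTop < γ' * ‖x‖ * ‖z‖ := by
  intro z hz
  obtain ⟨C, hC⟩ := hpb
  obtain ⟨M, hM⟩ := hbdd
  have hbddS : BddAbove (Set.range fun m : ℕ => ‖T ^ m‖) := ⟨C, by rintro _ ⟨m, rfl⟩; exact hC m⟩
  have hadj : ∀ j : ℕ, (ContinuousLinearMap.adjoint T) ^ j = ContinuousLinearMap.adjoint (T ^ j) :=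
    fun j => by
      simp only [← ContinuousLinearMap.star_eq_adjoint, star_pow]
  have hlim : ∀ j : ℕ, Filter.limsup
      (fun k => ‖⟪(T ^ n k) x, ((ContinuousLinearMap.adjoint T) ^ j) z⟫_ℂ‖) atTop
        < γ' * ‖x‖ * ‖z‖ := by
    intro j
    refine (h _ fun m => ?_).trans_le ?_
    · have := hz (m + j)
      rwa [pow_add] at this
    · have h1 : ‖((ContinuousLinearMap.adjoint T) ^ j) z‖ ≤ (⨆ m : ℕ, ‖T ^ m‖) * ‖z‖ := by
        rw [hadj]
        refine (ContinuousLinearMap.le_opNorm _ _).trans ?_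
        rw [LinearIsometryEquiv.norm_map]
        gcongr
        exact le_ciSup hbddS j
      calc γ * ‖x‖ * ‖((ContinuousLinearMap.adjoint T) ^ j) z‖
          ≤ γ * ‖x‖ * ((⨆ m : ℕ, ‖T ^ m‖) * ‖z‖) := by gcongr
        _ = γ' * ‖x‖ * ‖z‖ := by rw [hγ']; ring
  -- Finitely many strict inequalities leave room for one common constant `c`.
  obtain ⟨c, hc, hcB⟩ : ∃ c, (∀ j ∈ Finset.range (M + 1), Filter.limsup
      (fun k => ‖⟪(T ^ n k) x, ((ContinuousLinearMap.adjoint T) ^ j) z⟫_ℂ‖) atTop < c)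
        ∧ c < γ' * ‖x‖ * ‖z‖ := by
    have h1 := (Filter.eventually_all_finset (Finset.range (M + 1))
      (l := 𝓝[<] (γ' * ‖x‖ * ‖z‖))).2 fun j _ =>
        mem_nhdsWithin_of_mem_nhds (Ioi_mem_nhds (hlim j))
    exact (h1.and self_mem_nhdsWithin).exists
  have hev : ∀ᶠ k in atTop, ∀ j ∈ Finset.range (M + 1),
      ‖⟪(T ^ n k) x, ((ContinuousLinearMap.adjoint T) ^ j) z⟫_ℂ‖ < c := by
    refine (Filter.eventually_all_finset _).2 fun j hj => ?_
    refine Filter.eventually_lt_of_limsup_lt (hc j hj) ?_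
    refine Filter.isBoundedUnder_of
      ⟨C * ‖x‖ * ‖((ContinuousLinearMap.adjoint T) ^ j) z‖, fun k => ?_⟩
    refine (norm_inner_le_norm _ _).trans ?_
    gcongr
    exact (T ^ n k).le_of_opNorm_le (hC _) x
  obtain ⟨K, hK⟩ := Filter.eventually_atTop.1 hev
  refine lt_of_le_of_lt (Filter.limsup_le_of_le ?_ ?_) hcB
  · exact Filter.IsBoundedUnder.isCoboundedUnder_le
      (Filter.isBoundedUnder_of ⟨0, fun m => norm_nonneg _⟩)
  · filter_upwards [Filter.eventually_ge_atTop (n K + M)] with m hm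
    obtain ⟨k, j, hmk, hlt⟩ := exists_eq_add_of_strictMono hmono h0 m
    have hMk := hM k
    have hKk : K ≤ k := by
      by_contra hcon
      have := hmono (not_le.1 hcon)
      omega
    have := hK k hKk j (Finset.mem_range.2 (by omega))
    rw [hadj, ContinuousLinearMap.adjoint_inner_right] at this
    rw [hmk, add_comm, pow_add]
    exact this.le
end

section
/- Let H be a complex Hilbert space, let T be a contraction on H (‖T‖ ≤ 1) having a noncollapsing vector, let x ∈ H, let {n_k}_{k≥0} be a strictly increasing sequence of nonnegative integers of bounded increments with n_0 = 0, and let γ > 0. Then limsup_k |⟨T^{n_k} x, z⟩| < γ‖x‖‖z‖ for every noncollapsing vector z for the adjoint T* if and only if limsup_n |⟨T^n x, z⟩| < γ‖x‖‖z‖ for every noncollapsing vector z for T*. -/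
/-!
If `n k ≤ m < n (k + 1)` and `r = m - n k`, then `⟪T^m x, z⟫ = ⟪T^{n k} x, (T*)^r z⟫`, where `r`
is at most the bound `M` on the increments.  Each `(T*)^r z` is again noncollapsing for `T*` and has
norm at most `‖z‖`, so the hypothesis along `n` gives a strict bound for each `r`; as only finitely
many `r` occur, these combine into one uniform strict bound on the full sequence.  The converse holds
because the limsup along a subsequence is at most the full limsup.
-/

open Filter Topology
open scoped InnerProductSpace

lemma exists_le_lt_succ_of_strictMono {n : ℕ → ℕ} (hmono : StrictMono n) (h0 : n 0 = 0) (m : ℕ) :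
    ∃ k, n k ≤ m ∧ m < n (k + 1) := by
  induction m with
  | zero => exact ⟨0, h0.le, h0.ge.trans_lt (hmono (Nat.lt_add_one 0))⟩
  | succ m ih =>
    obtain ⟨k, h1, h2⟩ := ih
    rcases Nat.lt_or_ge (m + 1) (n (k + 1)) with h | h
    · exact ⟨k, by omega, h⟩
    · exact ⟨k + 1, h, by have := hmono (Nat.lt_add_one (k + 1)); omega⟩

lemma norm_pow_apply_le_of_contraction {H : Type*} [NormedAddCommGroup H] [InnerProductSpace ℂ H]
    (S : H →L[ℂ] H) (hS : ‖S‖ ≤ 1) (m : ℕ) (v : H) : ‖(S ^ m) v‖ ≤ ‖v‖ := by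
  induction m with
  | zero => simp
  | succ m ih =>
    rw [pow_succ', mul_apply_eq_comp]
    exact (S.le_of_opNorm_le hS _).trans (by simpa using ih)

/-- Let `T` be a contraction with a noncollapsing vector, `x ∈ H`, and `{n k}` a
boundedly spaced subsequence with `n 0 = 0`, and let `γ > 0`.  Then
`limsup_k |⟪T^{n k} x, z⟫| < γ ‖x‖ ‖z‖` for every noncollapsing vector `z` for `T*`
iff `limsup_m |⟪T^m x, z⟫| < γ ‖x‖ ‖z‖` for every noncollapsing vector `z` for `T*`. -/
theorem limsup_inner_lt_iff_boundedly_spaced_contraction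
    {H : Type*} [NormedAddCommGroup H] [InnerProductSpace ℂ H] [CompleteSpace H]
    (T : H →L[ℂ] H) (hcontr : ‖T‖ ≤ 1)
    (hnc : ∃ y : H, ∀ m : ℕ, (T ^ m) y ≠ 0)
    (x : H) (n : ℕ → ℕ) (hmono : StrictMono n) (h0 : n 0 = 0)
    (hbdd : ∃ M : ℕ, ∀ k, n (k + 1) - n k ≤ M)
    (γ : ℝ) (hγ : 0 < γ) :
    (∀ z : H, (∀ m : ℕ, ((ContinuousLinearMap.adjoint T) ^ m) z ≠ 0) →
        Filter.limsup (fun k => ‖⟪(T ^ n k) x, z⟫_ℂ‖) atTop < γ * ‖x‖ * ‖z‖) ↔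
      (∀ z : H, (∀ m : ℕ, ((ContinuousLinearMap.adjoint T) ^ m) z ≠ 0) →
        Filter.limsup (fun m => ‖⟪(T ^ m) x, z⟫_ℂ‖) atTop < γ * ‖x‖ * ‖z‖) := by
  have hbd : ∀ (m : ℕ) (z : H), ‖⟪(T ^ m) x, z⟫_ℂ‖ ≤ ‖x‖ * ‖z‖ := fun m z =>
    (norm_inner_le_norm _ _).trans
      (mul_le_mul_of_nonneg_right (norm_pow_apply_le_of_contraction T hcontr m x) (norm_nonneg z))
  -- Real `limsup` is only meaningful for bounded sequences: both bounds are needed below.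
  have hble : ∀ (f : ℕ → ℕ) (z : H),
      IsBoundedUnder (· ≤ ·) atTop (fun k => ‖⟪(T ^ f k) x, z⟫_ℂ‖) := fun f z =>
    isBoundedUnder_of ⟨_, fun k => hbd (f k) z⟩
  have hcob : ∀ (f : ℕ → ℕ) (z : H),
      IsCoboundedUnder (· ≤ ·) atTop (fun k => ‖⟪(T ^ f k) x, z⟫_ℂ‖) := fun f z =>
    (isBoundedUnder_of ⟨0, fun k => norm_nonneg _⟩ :
      IsBoundedUnder (· ≥ ·) atTop (fun k => ‖⟪(T ^ f k) x, z⟫_ℂ‖)).isCoboundedUnder_le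
  constructor
  · intro h z hz
    obtain ⟨M, hM⟩ := hbdd
    have hadj : ‖ContinuousLinearMap.adjoint T‖ ≤ 1 := by
      rwa [LinearIsometryEquiv.norm_map]
    have hlim : ∀ r : ℕ, limsup (fun k => ‖⟪(T ^ n k) x,
        ((ContinuousLinearMap.adjoint T) ^ r) z⟫_ℂ‖) atTop < γ * ‖x‖ * ‖z‖ := by
      intro r
      refine (h _ fun m => ?_).trans_le ?_
      · rw [← mul_apply_eq_comp, ← pow_add]
        exact hz _
      · exact mul_le_mul_of_nonneg_left (norm_pow_apply_le_of_contraction _ hadj r z)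
          (by positivity)
    -- A single constant below the target bound dominates all the finitely many limsups.
    obtain ⟨c, hc, hcL⟩ : ∃ c, (∀ r ∈ Set.Iic M, limsup (fun k => ‖⟪(T ^ n k) x,
        ((ContinuousLinearMap.adjoint T) ^ r) z⟫_ℂ‖) atTop < c) ∧ c < γ * ‖x‖ * ‖z‖ := by
      have h1 : ∀ᶠ c in 𝓝[<] (γ * ‖x‖ * ‖z‖), ∀ r ∈ Set.Iic M, limsup (fun k => ‖⟪(T ^ n k) x,
          ((ContinuousLinearMap.adjoint T) ^ r) z⟫_ℂ‖) atTop < c :=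
        (eventually_all_finite (Set.finite_Iic M)).2 fun r _ =>
          nhdsWithin_le_nhds (lt_mem_nhds (hlim r))
      exact (h1.and self_mem_nhdsWithin).exists
    have hev : ∀ᶠ k in atTop, ∀ r ∈ Set.Iic M, ‖⟪(T ^ n k) x,
        ((ContinuousLinearMap.adjoint T) ^ r) z⟫_ℂ‖ < c :=
      (eventually_all_finite (Set.finite_Iic M)).2 fun r hr =>
        eventually_lt_of_limsup_lt (hc r hr) (hble n _)
    obtain ⟨K, hK⟩ := eventually_atTop.1 hev
    refine lt_of_le_of_lt (limsup_le_of_le (hcob (fun m => m) z) ?_) hcL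
    filter_upwards [eventually_ge_atTop (n K)] with m hm
    obtain ⟨k, hk1, hk2⟩ := exists_le_lt_succ_of_strictMono hmono h0 m
    have hKk : K ≤ k := Nat.lt_succ_iff.1 (hmono.lt_iff_lt.1 (hm.trans_lt hk2))
    have hr : m - n k ≤ M := by have := hM k; omega
    have := (hK k hKk (m - n k) hr).le
    have hT : (ContinuousLinearMap.adjoint T) ^ (m - n k)
        = ContinuousLinearMap.adjoint (T ^ (m - n k)) := by
      simp only [← ContinuousLinearMap.star_eq_adjoint, star_pow]
    rwa [hT, ContinuousLinearMap.adjoint_inner_right, ← mul_apply_eq_comp,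
      ← pow_add, Nat.sub_add_cancel hk1] at this
  · intro h z hz
    refine lt_of_le_of_lt ?_ (h z hz)
    exact limsup_le_limsup_of_le (f := map n atTop) (u := fun m => ‖⟪(T ^ m) x, z⟫_ℂ‖)
      hmono.tendsto_atTop (hcob n z) (hble (fun m => m) z)
end

section
/- Let H be a complex Hilbert space, let T be a bounded linear operator on H, and let x be a nonzero vector in H. The following are pairwise equivalent: (a) T^n x converges weakly to 0; (b) there exists a boundedly spaced subsequence {T^{n_k}} of {T^n} (with n_0 = 0) such that T^{n_k} x converges weakly to 0; (c) for every boundedly spaced subsequence {T^{n_k}} of {T^n} (with n_0 = 0), T^{n_k} x converges weakly to 0. -/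
/-!
The only implication with content is from one boundedly spaced subsequence to the whole sequence.
If the gaps are at most `M`, every large `m` is `n k + j` with `k` large and `j ≤ M`
(`exists_mem_gap`), and `⟪T^(n k + j) x, z⟫ = ⟪T^(n k) x, (T^j)† z⟫`. For each of the finitely many
`j` the right-hand side tends to `0` as `k → ∞`, hence it does so uniformly in `j ≤ M`.
The subsequence of all powers shows that (c) implies (b).
-/

open Filter Topology
open scoped InnerProductSpace

lemma exists_mem_gap {n : ℕ → ℕ} (hn : StrictMono n) (K m : ℕ) (hm : n K ≤ m) :
    ∃ k ≥ K, n k ≤ m ∧ m < n (k + 1) := by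
  induction m, hm using Nat.le_induction with
  | base => exact ⟨K, le_rfl, le_rfl, hn (Nat.lt_succ_self K)⟩
  | succ m _ ih =>
    obtain ⟨k, hk, h1, h2⟩ := ih
    by_cases h : m + 1 < n (k + 1)
    · exact ⟨k, hk, by omega, h⟩
    · have h3 : n (k + 1) < n (k + 1 + 1) := hn (Nat.lt_succ_self _)
      exact ⟨k + 1, by omega, by omega, by omega⟩

/-- For an operator `T` and a nonzero `x`, the following are pairwise equivalent:
(a) `T^n x ⇀ 0`;
(b) `T^{n k} x ⇀ 0` for some boundedly spaced subsequence (with `n 0 = 0`);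
(c) `T^{n k} x ⇀ 0` for every boundedly spaced subsequence (with `n 0 = 0`). -/
theorem weak_stability_tfae_boundedly_spaced
    {H : Type*} [NormedAddCommGroup H] [InnerProductSpace ℂ H] [CompleteSpace H]
    (T : H →L[ℂ] H) (x : H) (hx : x ≠ 0) :
    List.TFAE
      [ (∀ z : H, Tendsto (fun m => ⟪(T ^ m) x, z⟫_ℂ) atTop (nhds 0)),
        (∃ n : ℕ → ℕ, StrictMono n ∧ n 0 = 0 ∧ (∃ M : ℕ, ∀ k, n (k + 1) - n k ≤ M) ∧
          ∀ z : H, Tendsto (fun k => ⟪(T ^ n k) x, z⟫_ℂ) atTop (nhds 0)),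
        (∀ n : ℕ → ℕ, StrictMono n → n 0 = 0 → (∃ M : ℕ, ∀ k, n (k + 1) - n k ≤ M) →
          ∀ z : H, Tendsto (fun k => ⟪(T ^ n k) x, z⟫_ℂ) atTop (nhds 0)) ] := by
  tfae_have 1 → 3 := fun h n hn _ _ z => (h z).comp hn.tendsto_atTop
  tfae_have 3 → 2 := fun h =>
    ⟨id, strictMono_id, rfl, ⟨1, fun k => by simp⟩,
      h id strictMono_id rfl ⟨1, fun k => by simp⟩⟩
  tfae_have 2 → 1 := by
    rintro ⟨n, hn, -, ⟨M, hM⟩, h⟩ z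
    rw [Metric.tendsto_atTop]
    intro ε hε
    have hj : ∀ j : ℕ, Tendsto (fun k => ⟪(T ^ (n k + j)) x, z⟫_ℂ) atTop (nhds 0) := by
      intro j
      refine (h (ContinuousLinearMap.adjoint (T ^ j) z)).congr fun k => ?_
      rw [ContinuousLinearMap.adjoint_inner_right, add_comm, pow_add,
        mul_apply_eq_comp]
    have hev : ∀ᶠ k in atTop, ∀ j ∈ Finset.range (M + 1),
        dist ⟪(T ^ (n k + j)) x, z⟫_ℂ 0 < ε :=
      (Filter.eventually_all_finset _).2 fun j _ => (hj j).eventually (Metric.ball_mem_nhds 0 hε)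
    obtain ⟨K, hK⟩ := eventually_atTop.1 hev
    refine ⟨n K, fun m hm => ?_⟩
    obtain ⟨k, hk, h1, h2⟩ := exists_mem_gap hn K m hm
    have h3 := hM k
    have h4 := hK k hk (m - n k) (Finset.mem_range.2 (by omega))
    rwa [Nat.add_sub_cancel' h1] at h4
  tfae_finish
end

section
/- Let H be a complex Hilbert space and let T be a bounded linear operator on H. Then T has a noncollapsing vector (i.e., there exists y ∈ H with T^n y ≠ 0 for every n ≥ 0) if and only if its adjoint T* has a noncollapsing vector (i.e., there exists z ∈ H with (T*)^n z ≠ 0 for every n ≥ 0). -/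
/-!
A bounded operator `T` has a noncollapsing vector exactly when it is not nilpotent. If every vector
collapses, then `H` is the countable union of the closed subspaces `ker (T ^ m)`, so by the Baire
category theorem one of these has nonempty interior, hence is all of `H`, and `T ^ m = 0`.
Non-nilpotency passes between `T` and `T*` because `(T*) ^ m = (T ^ m)*`.
-/

theorem exists_noncollapsing_iff_forall_pow_ne_zero
    {H : Type*} [NormedAddCommGroup H] [InnerProductSpace ℂ H] [CompleteSpace H]
    (T : H →L[ℂ] H) :
    (∃ y : H, ∀ m : ℕ, (T ^ m) y ≠ 0) ↔ ∀ m : ℕ, T ^ m ≠ 0 := by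
  constructor
  · rintro ⟨y, hy⟩ m hm
    exact hy m (by simp [hm])
  · intro h
    by_contra! hcollapse
    obtain ⟨m, hm⟩ := nonempty_interior_of_iUnion_of_closed
      (f := fun m : ℕ => ((T ^ m).ker : Set H))
      (fun m => (T ^ m).isClosed_ker)
      (Set.eq_univ_of_forall fun y => Set.mem_iUnion.2 (hcollapse y))
    have hker := Submodule.eq_top_of_nonempty_interior' _ hm
    refine h m (ContinuousLinearMap.ext fun y => ?_)
    have hy : y ∈ (T ^ m).ker := hker ▸ Submodule.mem_top
    exact hy

/-- An operator `T` on a complex Hilbert space has a noncollapsing vector iff its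
adjoint `T*` has a noncollapsing vector. -/
theorem noncollapsing_iff_adjoint_noncollapsing
    {H : Type*} [NormedAddCommGroup H] [InnerProductSpace ℂ H] [CompleteSpace H]
    (T : H →L[ℂ] H) :
    (∃ y : H, ∀ m : ℕ, (T ^ m) y ≠ 0) ↔
      (∃ z : H, ∀ m : ℕ, ((ContinuousLinearMap.adjoint T) ^ m) z ≠ 0) := by
  rw [exists_noncollapsing_iff_forall_pow_ne_zero, exists_noncollapsing_iff_forall_pow_ne_zero]
  refine forall_congr' fun m => ?_
  rw [← ContinuousLinearMap.star_eq_adjoint, ← star_pow, star_ne_zero]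
end

section
/- Let U be a unitary operator on a complex Hilbert space H. If U is weakly l-sequentially supercyclic but not weakly stable, then there exists a weakly l-sequentially supercyclic vector y ∈ H for U such that U^n y does not converge weakly to 0. -/
/-!
Every weakly l-sequentially supercyclic vector `y` works. The vectors `x` with `U ^ n x → 0` weakly
form a closed subspace `S` (closed because all `U ^ n` are isometries), and `S` is invariant
under `U`. If `y ∈ S`, the whole orbit of `y` lies in `S`; since every `x` is a weak limit of
multiples of orbit vectors, `x` is orthogonal to `Sᗮ`, so `x ∈ Sᗮᗮ = S`. Thus `S = H` and `U` is
weakly stable, a contradiction.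
-/

open Filter Topology
open scoped InnerProductSpace

/-- `y` is a weakly l-sequentially supercyclic vector for `T`. -/
def WeaklyLSeqSupercyclicVector {H : Type*} [NormedAddCommGroup H]
    [InnerProductSpace ℂ H] (T : H →L[ℂ] H) (y : H) : Prop :=
  y ≠ 0 ∧ ∀ x : H, ∃ (α : ℕ → ℂ) (m : ℕ → ℕ), (∀ i, α i ≠ 0) ∧ StrictMono m ∧
    ∀ w : H, Filter.Tendsto (fun i => ⟪α i • (T ^ m i) y, w⟫_ℂ) Filter.atTop
      (nhds ⟪x, w⟫_ℂ)

/-- The subspace of vectors whose orbit under `T` converges weakly to `0`. -/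
def weaklyStableSubspace {H : Type*} [NormedAddCommGroup H] [InnerProductSpace ℂ H]
    (T : H →L[ℂ] H) : Submodule ℂ H where
  carrier := {x | ∀ z : H, Tendsto (fun n => ⟪(T ^ n) x, z⟫_ℂ) atTop (nhds 0)}
  zero_mem' := fun z => by simp
  add_mem' := fun {a b} ha hb z => by
    simpa [inner_add_left] using (ha z).add (hb z)
  smul_mem' := fun c x hx z => by
    simpa [inner_smul_left] using (hx z).mul_const ((starRingEnd ℂ) c)

theorem isClosed_weaklyStableSubspace {H : Type*} [NormedAddCommGroup H] [InnerProductSpace ℂ H]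
    (T : H →L[ℂ] H) (hT : ∀ n x, ‖(T ^ n) x‖ ≤ ‖x‖) :
    IsClosed (weaklyStableSubspace T : Set H) := by
  refine isClosed_of_closure_subset fun x hx z => ?_
  rw [Metric.tendsto_atTop]
  intro ε hε
  have hz : 0 < ‖z‖ + 1 := by positivity
  obtain ⟨x', hx', hd⟩ := Metric.mem_closure_iff.1 hx (ε / 2 / (‖z‖ + 1)) (by positivity)
  obtain ⟨N, hN⟩ := Metric.tendsto_atTop.1 (hx' z) (ε / 2) (by positivity)
  refine ⟨N, fun n hn => ?_⟩
  have h1 := hN n hn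
  rw [dist_zero_right] at h1 ⊢
  rw [dist_eq_norm, lt_div_iff₀ hz] at hd
  have h2 : ‖⟪(T ^ n) (x - x'), z⟫_ℂ‖ ≤ ‖x - x'‖ * (‖z‖ + 1) :=
    (norm_inner_le_norm _ _).trans
      (mul_le_mul (hT n _) (by linarith) (norm_nonneg _) (norm_nonneg _))
  have h3 : ⟪(T ^ n) x, z⟫_ℂ = ⟪(T ^ n) (x - x'), z⟫_ℂ + ⟪(T ^ n) x', z⟫_ℂ := by
    rw [← inner_add_left, ← map_add, sub_add_cancel]
  rw [h3]
  exact (norm_add_le _ _).trans_lt (by linarith)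

theorem pow_apply_mem_weaklyStableSubspace {H : Type*} [NormedAddCommGroup H]
    [InnerProductSpace ℂ H] (T : H →L[ℂ] H) {y : H} (hy : y ∈ weaklyStableSubspace T) (k : ℕ) :
    (T ^ k) y ∈ weaklyStableSubspace T := fun z => by
  have h := (hy z).comp (tendsto_add_atTop_nat k)
  refine h.congr fun n => ?_
  simp [Function.iterate_add_apply]

/-- If a unitary operator `U` is weakly l-sequentially supercyclic but not weakly
stable, then there is a weakly l-sequentially supercyclic vector `y` for `U` such that
`U^n y` does not converge weakly to `0`. -/
theorem exists_supercyclic_vector_not_weakly_stable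
    {H : Type*} [NormedAddCommGroup H] [InnerProductSpace ℂ H] [CompleteSpace H]
    (U : H →L[ℂ] H)
    (hU : U ∘L ContinuousLinearMap.adjoint U = ContinuousLinearMap.id ℂ H ∧
          ContinuousLinearMap.adjoint U ∘L U = ContinuousLinearMap.id ℂ H)
    (hsc : ∃ y : H, WeaklyLSeqSupercyclicVector U y)
    (hns : ¬ ∀ x z : H, Tendsto (fun m => ⟪(U ^ m) x, z⟫_ℂ) atTop (nhds 0)) :
    ∃ y : H, WeaklyLSeqSupercyclicVector U y ∧
      ¬ ∀ z : H, Tendsto (fun m => ⟪(U ^ m) y, z⟫_ℂ) atTop (nhds 0) := by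
  obtain ⟨y, hy⟩ := hsc
  refine ⟨y, hy, fun hyS => hns fun x => ?_⟩
  have hnorm : ∀ n x, ‖(U ^ n) x‖ ≤ ‖x‖ := by
    intro n
    induction n with
    | zero => intro x; simp
    | succ n ih =>
      intro x
      rw [pow_succ, mul_apply_eq_comp]
      exact (ih _).trans ((U.norm_map_iff_adjoint_comp_self.2 hU.2) x).le
  have : CompleteSpace (weaklyStableSubspace U) :=
    (isClosed_weaklyStableSubspace U hnorm).completeSpace_coe
  change x ∈ weaklyStableSubspace U
  rw [← (weaklyStableSubspace U).orthogonal_orthogonal, Submodule.mem_orthogonal']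
  intro w hw
  obtain ⟨α, m, -, -, h⟩ := hy.2 x
  refine tendsto_nhds_unique (h w) (tendsto_const_nhds.congr fun i => ?_)
  exact ((Submodule.mem_orthogonal _ _).1 hw _ (Submodule.smul_mem _ _
    (pow_apply_mem_weaklyStableSubspace U hyS (m i)))).symm
end
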